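/- arXiv:1706.09728 — 4 statements merged into one kernel-verified Lean document; each statement's English description precedes it below -/
import Mathlib

section
/- Let X be a centered integrable real random variable admitting a Stein kernel τ with τ(X) integrable. Then the Wasserstein distance to the standard Gaussian satisfies d_W(X, 𝒩) ≤ E[|1 − τ(X)|]. -/
open MeasureTheory ProbabilityTheory

/-- Wasserstein distance between two laws on `ℝ`, as a supremum over
1-Lipschitz test functions. -/
noncomputable def dW (μ ν : Measure ℝ) : ℝ :=
  ⨆ h : {f : ℝ → ℝ // LipschitzWith 1 f}, |(∫ x, h.1 x ∂μ) - ∫ x, h.1 x ∂ν|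

/-- The standard Gaussian law `N(0,1)` on `ℝ`. -/
noncomputable def stdGaussian : Measure ℝ := gaussianReal 0 1

/-- `τ` is a Stein kernel for `X`: `E[X φ(X)] = E[φ'(X) τ(X)]` for every bounded
`C¹` function `φ` with bounded derivative. -/
def IsSteinKernel {Ω : Type*} [MeasureSpace Ω] (X : Ω → ℝ) (τ : ℝ → ℝ) : Prop :=
  ∀ φ : ℝ → ℝ, ContDiff ℝ 1 φ → (∃ C, ∀ x, |φ x| ≤ C) → (∃ C, ∀ x, |deriv φ x| ≤ C) →
    ∫ ω, X ω * φ (X ω) = ∫ ω, deriv φ (X ω) * τ (X ω)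

namespace SteinAux

open Filter Topology Set

noncomputable def w (y : ℝ) : ℝ := Real.exp (-(1/2) * y ^ 2)

lemma w_pos (y : ℝ) : 0 < w y := Real.exp_pos _

lemma w_le (y : ℝ) : w y ≤ 1 := by
  unfold w
  rw [Real.exp_le_one_iff]
  nlinarith [sq_nonneg y]

lemma w_cont : Continuous w := by unfold w; fun_prop

lemma w_deriv (y : ℝ) : HasDerivAt w (-y * w y) y := by
  have h1 : HasDerivAt (fun y : ℝ => -(1/2) * y ^ 2) (-y) y := by
    have := (hasDerivAt_pow 2 y).const_mul (-(1/2) : ℝ)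
    refine this.congr_deriv ?_
    norm_num
    ring
  have := h1.exp
  unfold w
  refine this.congr_deriv ?_
  ring

lemma w_int : Integrable w := integrable_exp_neg_mul_sq (by norm_num)

lemma yw_int : Integrable (fun y => y * w y) := integrable_mul_exp_neg_mul_sq (by norm_num)

lemma y2w_int : Integrable (fun y => y ^ 2 * w y) := by
  have := integrable_rpow_mul_exp_neg_mul_sq (b := 1/2) (by norm_num) (s := 2) (by norm_num)
  simpa [w] using this

noncomputable def Z : ℝ := ∫ y, w y

lemma Z_eq : Z = √(2 * Real.pi) := by
  unfold Z w
  rw [integral_gaussian]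
  congr 1
  ring

lemma Z_ge : 5/2 ≤ Z := by
  rw [Z_eq]
  apply Real.le_sqrt_of_sq_le
  nlinarith [Real.pi_gt_d2]

lemma w_top : Tendsto w atTop (𝓝 0) := by
  have := rpow_mul_exp_neg_mul_sq_isLittleO_exp_neg (b := 1/2) (by norm_num) 0
  have h2 : Tendsto (fun x : ℝ => Real.exp (-(1/2) * x)) atTop (𝓝 0) := by
    apply Real.tendsto_exp_atBot.comp
    exact tendsto_id.const_mul_atTop_of_neg (by norm_num)
  have := this.isBigO.trans_tendsto h2
  simp only [Real.rpow_zero, one_mul] at this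
  exact this

lemma yw_top : Tendsto (fun y => y * w y) atTop (𝓝 0) := by
  have := rpow_mul_exp_neg_mul_sq_isLittleO_exp_neg (b := 1/2) (by norm_num) 1
  have h2 : Tendsto (fun x : ℝ => Real.exp (-(1/2) * x)) atTop (𝓝 0) := by
    apply Real.tendsto_exp_atBot.comp
    exact tendsto_id.const_mul_atTop_of_neg (by norm_num)
  have := this.isBigO.trans_tendsto h2
  simpa [w] using this

noncomputable def b (x : ℝ) : ℝ := ∫ y in Ioi x, w y
noncomputable def a (x : ℝ) : ℝ := ∫ y in Iic x, w y

lemma ab (x : ℝ) : a x + b x = Z := by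
  have := integral_add_compl (measurableSet_Iic (a := x)) w_int
  rw [compl_Iic] at this
  exact this

lemma a_neg (x : ℝ) : a (-x) = b x := by
  unfold a b
  rw [← integral_comp_neg_Ioi]
  simp [w]

lemma w_neg (x : ℝ) : w (-x) = w x := by simp [w]

lemma b_pos (x : ℝ) : 0 < b x := by
  unfold b
  rw [setIntegral_pos_iff_support_of_nonneg_ae]
  · have : Function.support w = univ := by
      ext y; simp [(w_pos y).ne']
    rw [this]; simp
  · exact Eventually.of_forall fun y => (w_pos y).le
  · exact w_int.integrableOn

lemma int_yw (x : ℝ) : ∫ y in Ioi x, y * w y = w x := by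
  have := integral_Ioi_of_hasDerivAt_of_tendsto' (a := x) (f := fun y => - w y)
    (f' := fun y => y * w y) (m := 0)
    (fun y _ => (w_deriv y).neg.congr_deriv (by ring)) yw_int.integrableOn
    (by simpa using w_top.neg)
  simpa using this

lemma int_yw_Iic (x : ℝ) : ∫ y in Iic x, y * w y = - w x := by
  have := integral_comp_neg_Ioi (-x) (fun y => y * w y)
  simp only [neg_neg] at this
  rw [← this]
  simp only [w_neg, neg_mul]
  rw [integral_neg, int_yw, w_neg]

lemma int_y2w (x : ℝ) : ∫ y in Ioi x, y ^ 2 * w y = b x + x * w x := by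
  have := integral_Ioi_of_hasDerivAt_of_tendsto' (a := x) (f := fun y => - (y * w y))
    (f' := fun y => y ^ 2 * w y - w y) (m := 0)
    (fun y _ => by
      refine ((hasDerivAt_id y).mul (w_deriv y)).neg.congr_deriv ?_
      simp only [id]; ring) (y2w_int.integrableOn.sub w_int.integrableOn)
    (by simpa using yw_top.neg)
  rw [integral_sub y2w_int.integrableOn w_int.integrableOn] at this
  unfold b
  linarith

/-- Birnbaum's inequality. -/
lemma birnbaum (x : ℝ) : 0 ≤ b x ^ 2 + x * w x * b x - w x ^ 2 := by
  have hb := b_pos x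
  set c := w x / b x with hc
  have h0 : 0 ≤ ∫ y in Ioi x, (y ^ 2 * w y - 2 * c * (y * w y) + c ^ 2 * w y) := by
    apply integral_nonneg
    intro y
    have : 0 ≤ (y - c) ^ 2 * w y := mul_nonneg (sq_nonneg _) (w_pos y).le
    simp only [Pi.zero_apply]
    nlinarith
  rw [integral_add (by exact (y2w_int.sub (yw_int.const_mul _)).integrableOn)
      (by exact (w_int.const_mul _).integrableOn),
    integral_sub y2w_int.integrableOn (by exact (yw_int.const_mul _).integrableOn),
    integral_const_mul, integral_const_mul, int_y2w, int_yw] at h0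
  change 0 ≤ b x + x * w x - 2 * c * w x + c ^ 2 * b x at h0
  have hcb : c * b x = w x := by rw [hc]; field_simp
  have := mul_nonneg hb.le h0
  have e : b x * (b x + x * w x - 2 * c * w x + c ^ 2 * b x)
    = b x ^ 2 + x * w x * b x - 2 * (c * b x) * w x + (c * b x)^2 := by ring
  rw [e, hcb] at this
  linarith

lemma P_nonneg (x : ℝ) : 0 ≤ w x - x * b x := by
  have : ∫ y in Ioi x, (y * w y - x * w y) = w x - x * b x := by
    rw [integral_sub yw_int.integrableOn (by exact (w_int.const_mul _).integrableOn),
      integral_const_mul, int_yw]; rfl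
  rw [← this]
  apply setIntegral_nonneg measurableSet_Ioi
  intro y hy
  have := mul_nonneg (sub_nonneg.2 (mem_Ioi.1 hy).le) (w_pos y).le
  linarith

lemma Q_nonneg (x : ℝ) : 0 ≤ w x + x * a x := by
  have := P_nonneg (-x)
  rw [← a_neg, neg_neg, w_neg] at this
  linarith

lemma key_pos (x : ℝ) (hx : 0 ≤ x) : 2 * ((w x - x * b x) * (w x + x * a x)) ≤ w x * Z := by
  obtain ⟨u, hu0, hu1, hux⟩ : ∃ u : ℝ, 0 < u ∧ u ≤ 1 ∧ x * u = 1 - u ^ 2 := by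
    have hs : √(x ^ 2 + 4) ^ 2 = x ^ 2 + 4 := Real.sq_sqrt (by positivity)
    have hs0 := Real.sqrt_nonneg (x ^ 2 + 4)
    refine ⟨(√(x ^ 2 + 4) - x) / 2, ?_, ?_, ?_⟩ <;> nlinarith
  have hb := b_pos x
  have hw := w_pos x
  have hw1 := w_le x
  have hZ := Z_ge
  have hP := P_nonneg x
  have hbu : u * w x ≤ b x := by
    have h1 : 0 ≤ (b x - u * w x) * (u * b x + w x) := by
      have := mul_nonneg hu0.le (birnbaum x)
      have e : (b x - u * w x) * (u * b x + w x) =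
        u * (b x ^ 2 + x * w x * b x - w x ^ 2) := by
        linear_combination (-(w x * b x)) * hux
      rw [e]; exact this
    have h2 : 0 < u * b x + w x := by positivity
    have := nonneg_of_mul_nonneg_left h1 h2
    linarith
  have hPu : w x - x * b x ≤ w x * u ^ 2 := by
    nlinarith [mul_le_mul_of_nonneg_left hbu hx]
  have hQ : w x + x * a x = x * Z + (w x - x * b x) := by
    rw [← ab x]; ring
  have hQu : w x + x * a x ≤ x * Z + 2/5 * Z * u ^ 2 := by
    rw [hQ]
    nlinarith [mul_le_mul_of_nonneg_right (show w x ≤ 2/5 * Z by linarith) (sq_nonneg u)]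
  have hmul := mul_le_mul hPu hQu (Q_nonneg x) (by positivity)
  have poly : 2 * u - 2 * u ^ 3 + 4/5 * u ^ 4 ≤ 1 := by
    nlinarith [sq_nonneg (u ^ 2 - u), sq_nonneg (u^2 - 5/9), sq_nonneg (u - 3/4),
      mul_nonneg hu0.le (sq_nonneg (u - 3/4)), sq_nonneg (u^2 + u - 21/16),
      mul_nonneg (sub_nonneg.2 hu1) (sq_nonneg (u - 3/4))]
  have e : 2 * (w x * u ^ 2 * (x * Z + 2/5 * Z * u ^ 2)) =
     w x * Z * (2 * u - 2 * u ^ 3 + 4/5 * u ^ 4) := by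
    linear_combination (2 * w x * u * Z) * hux
  have := mul_le_mul_of_nonneg_left poly (show 0 ≤ w x * Z by positivity)
  linarith

lemma key (x : ℝ) : 2 * ((w x - x * b x) * (w x + x * a x)) ≤ w x * Z := by
  rcases le_total 0 x with hx | hx
  · exact key_pos x hx
  · have := key_pos (-x) (by linarith)
    rw [a_neg, ← a_neg (-x), neg_neg, w_neg] at this
    linarith

section
variable {h : ℝ → ℝ} (hh : LipschitzWith 1 h)
include hh

lemma lip (x y : ℝ) : |h x - h y| ≤ |x - y| := by
  have := hh.dist_le_mul x y
  simpa [Real.dist_eq] using this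

lemma hw_int : Integrable (fun y => h y * w y) := by
  have : Integrable (fun y => |h 0| * w y + |y * w y|) :=
    (w_int.const_mul _).add yw_int.abs
  refine this.mono' ((hh.continuous.mul w_cont).aestronglyMeasurable) ?_
  refine Eventually.of_forall fun y => ?_
  rw [Real.norm_eq_abs, abs_mul, abs_mul, abs_of_pos (w_pos y), ← add_mul]
  apply mul_le_mul_of_nonneg_right _ (w_pos y).le
  have := lip hh y 0
  have h2 := abs_sub_abs_le_abs_sub (h y) (h 0)
  simp only [sub_zero] at this
  linarith

lemma A_bound (x : ℝ) : |∫ y in Iic x, (h y - h x) * w y| ≤ w x + x * a x := by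
  have : ∫ y in Iic x, (x * w y - y * w y) = w x + x * a x := by
    rw [integral_sub (by exact (w_int.const_mul _).integrableOn) yw_int.integrableOn,
      integral_const_mul, int_yw_Iic]; unfold a; ring
  rw [← this, ← Real.norm_eq_abs]
  apply norm_integral_le_of_norm_le
    (by exact ((w_int.const_mul _).sub yw_int).integrableOn)
  filter_upwards [ae_restrict_mem measurableSet_Iic] with y hy
  rw [Real.norm_eq_abs, abs_mul, abs_of_pos (w_pos y), ← sub_mul]
  apply mul_le_mul_of_nonneg_right _ (w_pos y).le
  have := lip hh y x
  rwa [abs_sub_comm y x, abs_of_nonneg (sub_nonneg.2 (mem_Iic.1 hy))] at this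

lemma B_bound (x : ℝ) : |∫ y in Ioi x, (h y - h x) * w y| ≤ w x - x * b x := by
  have : ∫ y in Ioi x, (y * w y - x * w y) = w x - x * b x := by
    rw [integral_sub yw_int.integrableOn (by exact (w_int.const_mul _).integrableOn),
      integral_const_mul, int_yw]; rfl
  rw [← this, ← Real.norm_eq_abs]
  apply norm_integral_le_of_norm_le
    (by exact (yw_int.sub (w_int.const_mul _)).integrableOn)
  filter_upwards [ae_restrict_mem measurableSet_Ioi] with y hy
  rw [Real.norm_eq_abs, abs_mul, abs_of_pos (w_pos y), ← sub_mul]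
  apply mul_le_mul_of_nonneg_right _ (w_pos y).le
  have := lip hh y x
  rwa [abs_of_nonneg (sub_nonneg.2 (mem_Ioi.1 hy).le)] at this

/-- Solution of Stein's equation. -/
lemma stein_sol : ∃ f : ℝ → ℝ, ContDiff ℝ 1 f ∧ (∀ x, |f x| ≤ 1) ∧ (∀ x, |deriv f x| ≤ 1) ∧
    ∀ x, deriv f x - x * f x = h x - (∫ y, h y * w y) / Z := by
  set m := (∫ y, h y * w y) / Z with hm
  have hZ := Z_ge
  have hZ0 : Z ≠ 0 := by linarith
  set F : ℝ → ℝ := fun x => ∫ y in Iic x, (h y - m) * w y with hF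
  have hint : ∀ c : ℝ, Integrable (fun y => (h y - c) * w y) := fun c => by
    simp only [sub_mul]
    exact (hw_int hh).sub (w_int.const_mul _)
  have hcont : Continuous (fun y => (h y - m) * w y) :=
    (hh.continuous.sub continuous_const).mul w_cont
  have hFd : ∀ x, HasDerivAt F ((h x - m) * w x) x := by
    intro x
    have e : F = fun x => F 0 + ∫ y in (0:ℝ)..x, (h y - m) * w y := by
      funext x
      rw [intervalIntegral.integral_Iic_sub_Iic (hint m).integrableOn (hint m).integrableOn |>.symm]
      simp [hF]
    rw [e]
    exact (intervalIntegral.integral_hasDerivAt_right (hcont.intervalIntegrable _ _)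
      (hcont.stronglyMeasurableAtFilter _ _) hcont.continuousAt).const_add _
  set f : ℝ → ℝ := fun x => F x / w x with hf
  have hfd : ∀ x, HasDerivAt f (x * f x + (h x - m)) x := by
    intro x
    refine ((hFd x).div (w_deriv x) (w_pos x).ne').congr_deriv ?_
    have := (w_pos x).ne'
    simp only [hf]
    field_simp
    ring
  have hder : deriv f = fun x => x * f x + (h x - m) := funext fun x => (hfd x).deriv
  have hfc : Continuous f := continuous_iff_continuousAt.2 fun x => (hfd x).continuousAt
  -- representation
  have rep : ∀ x, ∃ A B : ℝ, |A| ≤ w x + x * a x ∧ |B| ≤ w x - x * b x ∧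
      F x * Z = b x * A - a x * B ∧ (h x - m) * Z = - (A + B) := by
    intro x
    refine ⟨_, _, A_bound hh x, B_bound hh x, ?_⟩
    set A := ∫ y in Iic x, (h y - h x) * w y
    set B := ∫ y in Ioi x, (h y - h x) * w y
    have hAB : A + B = m * Z - h x * Z := by
      have := integral_add_compl (measurableSet_Iic (a := x)) (hint (h x))
      rw [compl_Iic] at this
      change A + B = _ at this
      rw [this]
      simp only [sub_mul]
      rw [integral_sub (hw_int hh) (w_int.const_mul _), integral_const_mul, hm]
      field_simp
      rfl
    have hFA : F x = A + (h x - m) * a x := by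
      have : F x = ∫ y in Iic x, ((h y - h x) * w y + (h x - m) * w y) := by
        simp only [hF]
        congr 1
        funext y
        ring
      rw [this, integral_add (hint _).integrableOn (by exact (w_int.const_mul _).integrableOn),
        integral_const_mul]
      rfl
    have h2 : (h x - m) * Z = - (A + B) := by linarith
    refine ⟨?_, h2⟩
    rw [hFA]
    have := ab x
    linear_combination a x * h2 - A * this
  refine ⟨f, ?_, ?_, ?_, ?_⟩
  · rw [contDiff_one_iff_deriv]
    refine ⟨fun x => (hfd x).differentiableAt, ?_⟩
    rw [hder]
    exact (continuous_id.mul hfc).add (hh.continuous.sub continuous_const)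
  · intro x
    obtain ⟨A, B, hA, hB, h1, h2⟩ := rep x
    have hb := (b_pos x).le
    have ha : 0 ≤ a x := by have := (b_pos (-x)).le; rwa [← a_neg, neg_neg] at this
    have hw := w_pos x
    have hab := ab x
    simp only [hf]
    rw [abs_div, abs_of_pos hw, div_le_one hw]
    have hZp : 0 < Z := by linarith
    have : |F x| * Z ≤ w x * Z := by
      rw [← abs_of_pos hZp, ← abs_mul, abs_of_pos hZp, h1]
      calc |b x * A - a x * B| ≤ |b x * A| + |a x * B| := abs_sub _ _
        _ = b x * |A| + a x * |B| := by
          rw [abs_mul, abs_mul, abs_of_nonneg hb, abs_of_nonneg ha]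
        _ ≤ b x * (w x + x * a x) + a x * (w x - x * b x) := by gcongr
        _ = w x * Z := by rw [← hab]; ring
    exact le_of_mul_le_mul_right this hZp
  · intro x
    obtain ⟨A, B, hA, hB, h1, h2⟩ := rep x
    have hw := w_pos x
    have hab := ab x
    have hP := P_nonneg x
    have hQ := Q_nonneg x
    have hZp : 0 < Z := by linarith
    rw [hder]
    have hwZ : 0 < w x * Z := by positivity
    have e : (x * f x + (h x - m)) * (w x * Z) =
        -((w x - x * b x) * A + (w x + x * a x) * B) := by
      have : f x * w x = F x := by simp only [hf]; field_simp
      linear_combination (x * Z) * this + x * h1 + w x * h2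
    have : |x * f x + (h x - m)| * (w x * Z) ≤ 1 * (w x * Z) := by
      rw [← abs_of_pos hwZ, ← abs_mul, abs_of_pos hwZ, e, abs_neg]
      calc |(w x - x * b x) * A + (w x + x * a x) * B|
          ≤ |(w x - x * b x) * A| + |(w x + x * a x) * B| := abs_add_le _ _
        _ = (w x - x * b x) * |A| + (w x + x * a x) * |B| := by
          rw [abs_mul, abs_mul, abs_of_nonneg hP, abs_of_nonneg hQ]
        _ ≤ (w x - x * b x) * (w x + x * a x) + (w x + x * a x) * (w x - x * b x) := by gcongr
        _ ≤ 1 * (w x * Z) := by linarith [key x]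
    exact le_of_mul_le_mul_right this hwZ
  · intro x
    rw [hder]
    ring

end

lemma gauss_eq (h : ℝ → ℝ) : ∫ x, h x ∂stdGaussian = (∫ y, h y * w y) / Z := by
  unfold _root_.stdGaussian
  rw [integral_gaussianReal_eq_integral_smul (by norm_num), ← integral_div, Z_eq]
  congr 1
  funext y
  simp only [gaussianPDFReal, w, smul_eq_mul, sub_zero, NNReal.coe_one, mul_one]
  rw [show -y ^ 2 / 2 = -(1/2) * y ^ 2 by ring]
  ring

end SteinAux

open SteinAux in
theorem stein_wasserstein_bound
    {Ω : Type*} [MeasureSpace Ω] [IsProbabilityMeasure (ℙ : Measure Ω)]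
    (X : Ω → ℝ) (τ : ℝ → ℝ) (hXm : Measurable X) (hτm : Measurable τ)
    (hXint : Integrable X) (hXcentered : ∫ ω, X ω = 0)
    (hτint : Integrable (fun ω => τ (X ω)))
    (hkernel : IsSteinKernel X τ) :
    dW (Measure.map X ℙ) stdGaussian ≤ ∫ ω, |1 - τ (X ω)| := by
  have : Nonempty {f : ℝ → ℝ // LipschitzWith 1 f} := ⟨⟨id, LipschitzWith.id⟩⟩
  unfold dW
  apply ciSup_le
  rintro ⟨h, hh⟩
  obtain ⟨f, hfC, hf1, hf2, hfe⟩ := stein_sol hh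
  simp only
  rw [gauss_eq, integral_map hXm.aemeasurable hh.continuous.aestronglyMeasurable]
  set m := (∫ y, h y * w y) / Z
  have hdc : Continuous (deriv f) := hfC.continuous_deriv le_rfl
  have hdm : AEStronglyMeasurable (fun ω => deriv f (X ω)) (ℙ : Measure Ω) :=
    (hdc.measurable.comp hXm).aestronglyMeasurable
  have hfm : AEStronglyMeasurable (fun ω => f (X ω)) (ℙ : Measure Ω) :=
    (hfC.continuous.measurable.comp hXm).aestronglyMeasurable
  have i1 : Integrable (fun ω => deriv f (X ω)) (ℙ : Measure Ω) :=
    Integrable.of_bound hdm 1 (Filter.Eventually.of_forall fun ω => hf2 _)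
  have i2 : Integrable (fun ω => X ω * f (X ω)) (ℙ : Measure Ω) :=
    hXint.mul_bdd (c := 1) hfm (Filter.Eventually.of_forall fun ω => hf1 _)
  have i3 : Integrable (fun ω => deriv f (X ω) * τ (X ω)) (ℙ : Measure Ω) :=
    hτint.bdd_mul (c := 1) hdm (Filter.Eventually.of_forall fun ω => hf2 _)
  have hE : ∫ ω, h (X ω) = (∫ ω, (deriv f (X ω) - X ω * f (X ω))) + m := by
    have e : ∀ ω, h (X ω) = (deriv f (X ω) - X ω * f (X ω)) + m := fun ω => by
      rw [hfe]; ring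
    simp_rw [e]
    rw [integral_add (by exact i1.sub i2) (integrable_const _)]
    simp
  have hk := hkernel f hfC ⟨1, hf1⟩ ⟨1, hf2⟩
  rw [hE, integral_sub i1 i2, hk, add_sub_cancel_right, ← integral_sub i1 i3, ← Real.norm_eq_abs]
  apply norm_integral_le_of_norm_le ((integrable_const 1).sub hτint).abs
  refine Filter.Eventually.of_forall fun ω => ?_
  have e : deriv f (X ω) - deriv f (X ω) * τ (X ω) = deriv f (X ω) * (1 - τ (X ω)) := by ring
  rw [e, Real.norm_eq_abs, abs_mul]
  exact mul_le_of_le_one_left (abs_nonneg _) (hf2 _)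
end

section
/- Let X be a centered integrable real random variable admitting a Stein kernel τ with τ(X) integrable. Then the total variation distance to the standard Gaussian satisfies d_TV(X, 𝒩) ≤ 2 E[|1 − τ(X)|]. -/
open MeasureTheory ProbabilityTheory

/-- Total variation distance between two laws on `ℝ`, as a supremum over Borel sets. -/
noncomputable def dTV (μ ν : Measure ℝ) : ℝ :=
  ⨆ A : {s : Set ℝ // MeasurableSet s}, |(μ A.1).toReal - (ν A.1).toReal|

noncomputable def wS (t : ℝ) : ℝ := Real.exp (-(1/2) * t ^ 2)

lemma wS_cont : Continuous wS := by unfold wS; fun_prop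

lemma wS_pos (t : ℝ) : 0 < wS t := Real.exp_pos _

lemma wS_int : Integrable wS := integrable_exp_neg_mul_sq (by norm_num)

lemma wS_mul_int : Integrable (fun t => t * wS t) := integrable_mul_exp_neg_mul_sq (by norm_num)

lemma wS_deriv (t : ℝ) : HasDerivAt wS (-(t * wS t)) t := by
  have h : HasDerivAt (fun t : ℝ => -(1/2) * t ^ 2) (-t) t := by
    refine ((hasDerivAt_pow 2 t).const_mul (-(1/2) : ℝ)).congr_deriv ?_
    norm_num; ring
  refine h.exp.congr_deriv ?_
  unfold wS; ring

lemma wS_tendsto_top : Filter.Tendsto wS Filter.atTop (nhds 0) := by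
  unfold wS
  apply Real.tendsto_exp_atBot.comp
  apply Filter.Tendsto.const_mul_atTop_of_neg (by norm_num)
  exact Filter.tendsto_pow_atTop (by norm_num)

lemma wS_tendsto_bot : Filter.Tendsto wS Filter.atBot (nhds 0) := by
  have := wS_tendsto_top.comp Filter.tendsto_neg_atBot_atTop
  refine this.congr fun x => ?_
  simp [wS]

lemma wS_Ioi (x : ℝ) : ∫ t in Set.Ioi x, t * wS t = wS x := by
  have := integral_Ioi_of_hasDerivAt_of_tendsto (a := x) (f := fun t => - wS t) (f' := fun t => t * wS t)
    (m := 0) (wS_cont.neg.continuousWithinAt)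
    (fun t _ => (wS_deriv t).neg.congr_deriv (by simp)) wS_mul_int.integrableOn
    (by simpa using wS_tendsto_top.neg)
  rw [this]; simp

lemma wS_Iic (x : ℝ) : ∫ t in Set.Iic x, t * wS t = - wS x := by
  have := integral_Iic_of_hasDerivAt_of_tendsto (a := x) (f := fun t => - wS t) (f' := fun t => t * wS t)
    (m := 0) (wS_cont.neg.continuousWithinAt)
    (fun t _ => (wS_deriv t).neg.congr_deriv (by simp)) wS_mul_int.integrableOn
    (by simpa using wS_tendsto_bot.neg)
  rw [this]; simp

lemma stein_sol (h : ℝ → ℝ) (hc : Continuous h) (h0 : ∀ x, 0 ≤ h x) (h1 : ∀ x, h x ≤ 1) :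
    ∃ f : ℝ → ℝ, ContDiff ℝ 1 f ∧ (∃ C, ∀ x, |f x| ≤ C) ∧ (∀ x, |deriv f x| ≤ 2) ∧
      ∀ x, deriv f x = x * f x + (h x - ∫ y, h y ∂stdGaussian) := by
  have : IsProbabilityMeasure stdGaussian := by unfold _root_.stdGaussian; infer_instance
  set c := ∫ y, h y ∂stdGaussian with hcdef
  have hint : Integrable h stdGaussian :=
    Integrable.of_bound (C := 1) hc.aestronglyMeasurable
      (ae_of_all _ fun x => by rw [Real.norm_eq_abs, abs_of_nonneg (h0 x)]; exact h1 x)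
  have c0 : 0 ≤ c := integral_nonneg h0
  have c1 : c ≤ 1 := by
    have := integral_mono hint (integrable_const (1:ℝ)) h1
    simpa using this
  have hg : ∀ x, |h x - c| ≤ 1 := fun x => by
    rw [abs_le]; constructor <;> linarith [h0 x, h1 x]
  set g : ℝ → ℝ := fun t => (h t - c) * wS t with hgdef
  have gc : Continuous g := (hc.sub continuous_const).mul wS_cont
  have gle : ∀ t, ‖g t‖ ≤ wS t := fun t => by
    rw [hgdef, Real.norm_eq_abs, abs_mul, abs_of_pos (wS_pos t)]
    exact mul_le_of_le_one_left (wS_pos t).le (hg t)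
  have gi : Integrable g := wS_int.mono' gc.aestronglyMeasurable (ae_of_all _ gle)
  have g0 : ∫ t, g t = 0 := by
    have e : ∫ t, (h t - c) ∂stdGaussian = 0 := by
      rw [integral_sub hint (integrable_const _)]; simp [hcdef]
    unfold _root_.stdGaussian at e
    rw [integral_gaussianReal_eq_integral_smul (by norm_num)] at e
    have e2 : ∀ t, gaussianPDFReal 0 1 t • (h t - c) = (√(2 * Real.pi))⁻¹ * g t := fun t => by
      simp only [gaussianPDFReal, hgdef, wS, smul_eq_mul]
      rw [show -(t - 0) ^ 2 / (2 * ((1 : NNReal) : ℝ)) = -(1/2) * t ^ 2 by simp; ring]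
      simp; ring
    simp_rw [e2] at e
    rw [integral_const_mul] at e
    have : (√(2 * Real.pi))⁻¹ ≠ 0 := by positivity
    exact (mul_eq_zero.1 e).resolve_left this
  set G : ℝ → ℝ := fun x => ∫ t in Set.Iic x, g t with hG
  have Gd : ∀ x, HasDerivAt G (g x) x := fun x => by
    have e : G = fun x => (∫ t in Set.Iic 0, g t) + ∫ t in (0:ℝ)..x, g t := by
      ext y
      rw [← intervalIntegral.integral_Iic_sub_Iic gi.integrableOn gi.integrableOn]; simp [hG]
    rw [e]
    exact ((gc.integral_hasStrictDerivAt 0 x).hasDerivAt).const_add _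
  have Gb : ∀ x, |x| * |G x| ≤ wS x := fun x => by
    rcases le_total 0 x with hx | hx
    · have e : G x = - ∫ t in Set.Ioi x, g t := by
        have := intervalIntegral.integral_Iic_add_Ioi (b := x) gi.integrableOn gi.integrableOn
        rw [g0] at this; simp only [hG]; linarith
      rw [e, abs_neg, abs_of_nonneg hx, ← wS_Ioi x]
      calc x * |∫ t in Set.Ioi x, g t| ≤ x * ∫ t in Set.Ioi x, wS t := by
            gcongr
            exact norm_integral_le_of_norm_le wS_int.integrableOn (ae_of_all _ gle)
        _ = ∫ t in Set.Ioi x, x * wS t := by rw [integral_const_mul]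
        _ ≤ _ := by
            apply setIntegral_mono_on (wS_int.const_mul x).integrableOn wS_mul_int.integrableOn
              measurableSet_Ioi
            intro t ht
            exact mul_le_mul_of_nonneg_right (le_of_lt ht) (wS_pos t).le
    · rw [abs_of_nonpos hx]
      have e : wS x = ∫ t in Set.Iic x, -(t * wS t) := by
        rw [integral_neg, wS_Iic]; simp
      rw [e]
      calc -x * |∫ t in Set.Iic x, g t| ≤ -x * ∫ t in Set.Iic x, wS t := by
            gcongr
            · linarith
            · exact norm_integral_le_of_norm_le wS_int.integrableOn (ae_of_all _ gle)
        _ = ∫ t in Set.Iic x, -x * wS t := by rw [integral_const_mul]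
        _ ≤ _ := by
            apply setIntegral_mono_on (wS_int.const_mul (-x)).integrableOn
              wS_mul_int.neg.integrableOn measurableSet_Iic
            intro t ht
            have := mul_le_mul_of_nonneg_right (show t ≤ x from ht) (wS_pos t).le
            simp only [Pi.neg_apply]
            linarith
  set f : ℝ → ℝ := fun x => G x / wS x with hf
  have fd : ∀ x, HasDerivAt f (x * f x + (h x - c)) x := fun x => by
    refine ((Gd x).div (wS_deriv x) (wS_pos x).ne').congr_deriv ?_
    have := (wS_pos x).ne'
    simp only [hf, hgdef]
    field_simp
    ring
  have xf : ∀ x, |x| * |f x| ≤ 1 := fun x => by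
    simp only [hf]
    rw [abs_div, abs_of_pos (wS_pos x), ← mul_div_assoc, div_le_one (wS_pos x)]
    exact Gb x
  have fdiff : Differentiable ℝ f := fun x => (fd x).differentiableAt
  have fder : ∀ x, deriv f x = x * f x + (h x - c) := fun x => (fd x).deriv
  refine ⟨f, ?_, ?_, ?_, fder⟩
  · rw [contDiff_one_iff_deriv]
    refine ⟨fdiff, ?_⟩
    rw [funext fder]
    exact (continuous_id.mul fdiff.continuous).add (hc.sub continuous_const)
  · obtain ⟨C, hC⟩ := (isCompact_Icc (a := (-1:ℝ)) (b := 1)).exists_bound_of_continuousOn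
      fdiff.continuous.continuousOn
    refine ⟨max C 1, fun x => ?_⟩
    rcases le_total |x| 1 with hx | hx
    · exact le_max_of_le_left (hC x (abs_le.1 hx))
    · apply le_max_of_le_right
      nlinarith [xf x, abs_nonneg (f x)]
  · intro x
    rw [fder]
    have := xf x
    rw [← abs_mul] at this
    linarith [abs_add_le (x * f x) (h x - c), hg x]

lemma stein_cont {Ω : Type*} [MeasureSpace Ω] [IsProbabilityMeasure (ℙ : Measure Ω)]
    (X : Ω → ℝ) (τ : ℝ → ℝ) (hXm : Measurable X)
    (hXint : Integrable X)
    (hτint : Integrable (fun ω => τ (X ω)))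
    (hkernel : IsSteinKernel X τ)
    (h : ℝ → ℝ) (hc : Continuous h) (h0 : ∀ x, 0 ≤ h x) (h1 : ∀ x, h x ≤ 1) :
    |∫ x, h x ∂(Measure.map X ℙ) - ∫ x, h x ∂stdGaussian| ≤ 2 * ∫ ω, |1 - τ (X ω)| := by
  obtain ⟨f, fC, ⟨C, hC⟩, f2, fe⟩ := stein_sol h hc h0 h1
  have hk := hkernel f fC ⟨C, hC⟩ ⟨2, f2⟩
  have dc : Continuous (deriv f) := fC.continuous_deriv le_rfl
  rw [integral_map hXm.aemeasurable hc.aestronglyMeasurable]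
  set c := ∫ x, h x ∂stdGaussian
  have i1 : Integrable (fun ω => X ω * f (X ω)) :=
    hXint.mul_bdd (c := C) (fC.continuous.measurable.comp hXm).aestronglyMeasurable
      (ae_of_all _ fun ω => hC _)
  have i2 : Integrable (fun ω => deriv f (X ω) * τ (X ω)) :=
    hτint.bdd_mul (c := 2) (dc.measurable.comp hXm).aestronglyMeasurable
      (ae_of_all _ fun ω => f2 _)
  have i3 : Integrable (fun ω => deriv f (X ω)) :=
    Integrable.of_bound (C := 2) (dc.measurable.comp hXm).aestronglyMeasurable
      (ae_of_all _ fun ω => f2 _)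
  have i4 : Integrable (fun ω => h (X ω)) :=
    Integrable.of_bound (C := 1) (hc.measurable.comp hXm).aestronglyMeasurable
      (ae_of_all _ fun x => by rw [Real.norm_eq_abs, abs_of_nonneg (h0 _)]; exact h1 _)
  have e : ∫ ω, (h (X ω) - c) = ∫ ω, deriv f (X ω) * (1 - τ (X ω)) := by
    have a : ∫ ω, (h (X ω) - c) = ∫ ω, (deriv f (X ω) - X ω * f (X ω)) := by
      congr 1; ext ω; rw [fe]; ring
    rw [a, integral_sub i3 i1, hk, ← integral_sub i3 i2]
    congr 1; ext ω; ring
  have e' : ∫ ω, (h (X ω) - c) = (∫ ω, h (X ω)) - c := by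
    rw [integral_sub i4 (integrable_const _)]; simp
  rw [← e', e, ← integral_const_mul, ← Real.norm_eq_abs]
  have i5 : Integrable (fun ω => 1 - τ (X ω)) := (integrable_const _).sub hτint
  refine norm_integral_le_of_norm_le (i5.abs.const_mul 2) (ae_of_all _ fun ω => ?_)
  rw [Real.norm_eq_abs, abs_mul]
  exact mul_le_mul_of_nonneg_right (f2 _) (abs_nonneg _)

lemma tv_of_cont (μ ν : Measure ℝ) [IsProbabilityMeasure μ] [IsProbabilityMeasure ν] (B : ℝ)
    (H : ∀ h : ℝ → ℝ, Continuous h → (∀ x, 0 ≤ h x) → (∀ x, h x ≤ 1) →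
      |∫ x, h x ∂μ - ∫ x, h x ∂ν| ≤ B) : dTV μ ν ≤ B := by
  have closed : ∀ F : Set ℝ, IsClosed F → |(μ F).toReal - (ν F).toReal| ≤ B := by
    intro F hF
    have key : ∀ ρ : Measure ℝ, IsProbabilityMeasure ρ → Filter.Tendsto
        (fun n => ∫ x, ((hF.apprSeq n x : NNReal) : ℝ) ∂ρ) Filter.atTop (nhds (ρ F).toReal) := by
      intro ρ _
      have := (ENNReal.tendsto_toReal (measure_ne_top ρ F)).comp
        (HasOuterApproxClosed.tendsto_lintegral_apprSeq hF ρ)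
      refine this.congr fun n => ?_
      rw [integral_eq_lintegral_of_nonneg_ae (ae_of_all _ fun x => NNReal.coe_nonneg _)]
      · simp
      · exact (NNReal.continuous_coe.comp (hF.apprSeq n).continuous).aestronglyMeasurable
    refine le_of_tendsto ((key μ inferInstance).sub (key ν inferInstance)).abs
      (Filter.Eventually.of_forall fun n => ?_)
    exact H _ (NNReal.continuous_coe.comp (hF.apprSeq n).continuous) (fun x => NNReal.coe_nonneg _)
      (fun x => by exact_mod_cast HasOuterApproxClosed.apprSeq_apply_le_one hF n x)
  unfold dTV
  have : Nonempty {s : Set ℝ // MeasurableSet s} := ⟨⟨∅, MeasurableSet.empty⟩⟩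
  refine ciSup_le fun ⟨A, hA⟩ => ?_
  refine le_of_forall_pos_le_add fun ε hε => ?_
  obtain ⟨F, hFA, hF, hlt⟩ := hA.exists_isClosed_sdiff_lt (μ := μ + ν) (measure_ne_top _ _)
    (ε := ENNReal.ofReal ε) (by simpa using hε)
  have sum : ∀ ρ : Measure ℝ, IsProbabilityMeasure ρ → ρ ≤ μ + ν →
      (ρ A).toReal - (ρ F).toReal < ε ∧ 0 ≤ (ρ A).toReal - (ρ F).toReal := by
    intro ρ _ hle
    have h1 := measureReal_sdiff (μ := ρ) hFA hF.measurableSet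
    simp only [Measure.real] at h1
    rw [← h1]
    refine ⟨?_, ENNReal.toReal_nonneg⟩
    rw [← ENNReal.lt_ofReal_iff_toReal_lt (measure_ne_top _ _)]
    exact (hle _).trans_lt hlt
  have a := sum μ inferInstance (Measure.le_add_right le_rfl)
  have b := sum ν inferInstance (Measure.le_add_left le_rfl)
  have := abs_le.1 (closed F hF)
  rw [abs_le]
  constructor <;> simp only <;> linarith [a.1, a.2, b.1, b.2]

theorem stein_tv_bound
    {Ω : Type*} [MeasureSpace Ω] [IsProbabilityMeasure (ℙ : Measure Ω)]
    (X : Ω → ℝ) (τ : ℝ → ℝ) (hXm : Measurable X) (hτm : Measurable τ)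
    (hXint : Integrable X) (hXcentered : ∫ ω, X ω = 0)
    (hτint : Integrable (fun ω => τ (X ω)))
    (hkernel : IsSteinKernel X τ) :
    dTV (Measure.map X ℙ) stdGaussian ≤ 2 * ∫ ω, |1 - τ (X ω)| := by
  have : IsProbabilityMeasure stdGaussian := by unfold _root_.stdGaussian; infer_instance
  have : IsProbabilityMeasure (Measure.map X ℙ) :=
    Measure.isProbabilityMeasure_map hXm.aemeasurable
  exact tv_of_cont _ _ _ (stein_cont X τ hXm hXint hτint hkernel)
end

section
/- Let X be a centered square-integrable real random variable admitting a Stein kernel τ with τ(X) square-integrable and E[τ(X)] = E[X²]. Then d_W(X, 𝒩) ≤ |1 − E[X²]| + √(E[τ(X)²] − (E[X²])²). -/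
open MeasureTheory ProbabilityTheory

open Set Filter Topology

noncomputable def gg (y : ℝ) : ℝ := gaussianPDFReal 0 1 y

lemma gg_eq (y : ℝ) : gg y = (√(2 * Real.pi))⁻¹ * Real.exp (-(1/2) * y ^ 2) := by
  simp only [gg, gaussianPDFReal]
  simp
  left
  ring

lemma gg_pos (y : ℝ) : 0 < gg y := gaussianPDFReal_pos 0 1 y one_ne_zero

lemma gg_le (y : ℝ) : gg y ≤ 1 / 2 := by
  rw [gg_eq]
  have h1 : (2 : ℝ) ≤ √(2 * Real.pi) := by
    apply Real.le_sqrt_of_sq_le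
    nlinarith [Real.pi_gt_three]
  have h2 : (√(2 * Real.pi))⁻¹ ≤ 1 / 2 := by
    rw [one_div]
    exact inv_anti₀ (by norm_num) h1
  have h3 : Real.exp (-(1/2) * y ^ 2) ≤ 1 := by
    rw [Real.exp_le_one_iff]
    nlinarith [sq_nonneg y]
  have h4 := Real.exp_pos (-(1/2) * y ^ 2)
  nlinarith

lemma gg_deriv (y : ℝ) : HasDerivAt gg (-(y * gg y)) y := by
  have : gg = fun y => (√(2 * Real.pi))⁻¹ * Real.exp (-(1/2) * y ^ 2) := funext gg_eq
  rw [this]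
  have h := ((((hasDerivAt_id y).pow 2).const_mul (-(1/2) : ℝ)).exp).const_mul (√(2 * Real.pi))⁻¹
  convert! h using 1
  simp
  ring

lemma gg_cont : Continuous gg :=
  continuous_iff_continuousAt.2 fun y => (gg_deriv y).continuousAt

lemma gg_int0 : Integrable gg := integrable_gaussianPDFReal 0 1

lemma gg_int1 : Integrable (fun y => y * gg y) := by
  have h := (integrable_mul_exp_neg_mul_sq (b := 1/2) (by norm_num)).const_mul (√(2 * Real.pi))⁻¹
  refine h.congr (ae_of_all _ fun y => ?_)
  simp only [gg_eq]; ring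

lemma gg_int2 : Integrable (fun y => y ^ 2 * gg y) := by
  have h := (integrable_rpow_mul_exp_neg_mul_sq (b := 1/2) (by norm_num)
    (s := 2) (by norm_num)).const_mul (√(2 * Real.pi))⁻¹
  refine h.congr (ae_of_all _ fun y => ?_)
  simp only [gg_eq, Real.rpow_ofNat]; ring

lemma gg_int_one : ∫ y, gg y = 1 := integral_gaussianPDFReal_eq_one 0 one_ne_zero

lemma ygg_deriv (y : ℝ) : HasDerivAt (fun y => y * gg y) (gg y - y ^ 2 * gg y) y := by
  convert! (hasDerivAt_id y).mul (gg_deriv y) using 1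
  simp; ring

lemma gg_Ioi1 (x : ℝ) : ∫ y in Ioi x, y * gg y = gg x := by
  have h := integral_Ioi_of_hasDerivAt_of_tendsto' (a := x) (fun y _ => gg_deriv y)
    gg_int1.neg.integrableOn
    (tendsto_zero_of_hasDerivAt_of_integrableOn_Ioi (a := x) (fun y _ => gg_deriv y)
    gg_int1.neg.integrableOn gg_int0.integrableOn)
  rw [integral_neg] at h
  linarith

lemma gg_Iic1 (x : ℝ) : ∫ y in Iic x, y * gg y = - gg x := by
  have h := integral_Iic_of_hasDerivAt_of_tendsto' (a := x) (fun y _ => gg_deriv y)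
    gg_int1.neg.integrableOn
    (tendsto_zero_of_hasDerivAt_of_integrableOn_Iic (a := x) (fun y _ => gg_deriv y)
    gg_int1.neg.integrableOn gg_int0.integrableOn)
  rw [integral_neg] at h
  linarith

lemma gg_Ioi2 (x : ℝ) : ∫ y in Ioi x, y ^ 2 * gg y = (∫ y in Ioi x, gg y) + x * gg x := by
  have h := integral_Ioi_of_hasDerivAt_of_tendsto' (a := x) (fun y _ => ygg_deriv y)
    (gg_int0.sub gg_int2).integrableOn
    (tendsto_zero_of_hasDerivAt_of_integrableOn_Ioi (a := x) (fun y _ => ygg_deriv y)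
    (gg_int0.sub gg_int2).integrableOn gg_int1.integrableOn)
  rw [integral_sub gg_int0.integrableOn gg_int2.integrableOn] at h
  linarith

lemma gg_Iic2 (x : ℝ) : ∫ y in Iic x, y ^ 2 * gg y = (∫ y in Iic x, gg y) - x * gg x := by
  have h := integral_Iic_of_hasDerivAt_of_tendsto' (a := x) (fun y _ => ygg_deriv y)
    (gg_int0.sub gg_int2).integrableOn
    (tendsto_zero_of_hasDerivAt_of_integrableOn_Iic (a := x) (fun y _ => ygg_deriv y)
    (gg_int0.sub gg_int2).integrableOn gg_int1.integrableOn)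
  rw [integral_sub gg_int0.integrableOn gg_int2.integrableOn] at h
  linarith

lemma gg_cs (S : Set ℝ) (x : ℝ) :
    ((∫ y in S, y * gg y) - x * ∫ y in S, gg y) ^ 2 ≤ (∫ y in S, gg y) *
      ((∫ y in S, y ^ 2 * gg y) - 2 * x * (∫ y in S, y * gg y) + x ^ 2 * ∫ y in S, gg y) := by
  set a0 := ∫ y in S, gg y with h0
  set a1 := ∫ y in S, y * gg y with h1
  set a2 := ∫ y in S, y ^ 2 * gg y with h2
  have key : ∀ β : ℝ, 0 ≤ a0 * (β * β) + (2 * (a1 - x * a0)) * β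
      + (a2 - 2 * x * a1 + x ^ 2 * a0) := by
    intro β
    have hn : 0 ≤ ∫ y in S, (β + (y - x)) ^ 2 * gg y :=
      integral_nonneg fun y => mul_nonneg (sq_nonneg _) (gg_pos y).le
    have e : (fun y => (β + (y - x)) ^ 2 * gg y) = fun y =>
        (y ^ 2 * gg y + 2 * (β - x) * (y * gg y)) + (β - x) ^ 2 * gg y := by
      ext y; ring
    have hi : Integrable (fun y => y ^ 2 * gg y + 2 * (β - x) * (y * gg y))
        (volume.restrict S) := gg_int2.integrableOn.add (gg_int1.integrableOn.const_mul _)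
    rw [e, integral_add hi
      (gg_int0.integrableOn.const_mul _), integral_add gg_int2.integrableOn
      (gg_int1.integrableOn.const_mul _), integral_const_mul, integral_const_mul,
      ← h0, ← h1, ← h2] at hn
    linarith
  have := discrim_le_zero key
  unfold discrim at this
  linarith

lemma alg1 (x b t φ : ℝ) (hx : 0 ≤ x) (hb : 0 ≤ b) (ht : 0 ≤ t) (hφ : φ ≤ 1 / 2)
    (hφ0 : 0 < φ) (e : φ = b + x * t) (cs : b ^ 2 ≤ t * (t - x * b)) : 2 * (b * (b + x)) ≤ φ := by
  rcases hb.eq_or_lt with rfl | hb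
  · simpa using hφ0.le
  obtain ⟨y, hy⟩ : ∃ y, φ = b * y := ⟨φ / b, by field_simp⟩
  obtain ⟨r, hr⟩ : ∃ r, t = b * r := ⟨t / b, by field_simp⟩
  subst hr
  have hr0 : 0 ≤ r := by
    by_contra hc
    push Not at hc
    nlinarith
  have hyx : y = 1 + x * r := by
    have : b * y = b * (1 + x * r) := by rw [← hy, e]; ring
    exact mul_left_cancel₀ hb.ne' this
  have hyr : y ≤ r ^ 2 := by
    have : b ^ 2 * y ≤ b ^ 2 * r ^ 2 := by rw [hyx]; nlinarith
    exact le_of_mul_le_mul_left this (by positivity)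
  have hy1 : 1 ≤ y := by rw [hyx]; nlinarith [mul_nonneg hx hr0]
  have hrpos : 0 < r := by
    rcases hr0.eq_or_lt with h | h
    · rw [← h] at hyr; norm_num at hyr; linarith
    · exact h
  have h1 : 2 * y ≤ (y + 1) * r := by
    refine (sq_le_sq₀ (by linarith) (by positivity)).1 ?_
    nlinarith [mul_nonneg (by linarith : 0 ≤ y) (sq_nonneg (y - 1)),
      mul_le_mul_of_nonneg_left hyr (sq_nonneg (y + 1))]
  have hby : b * y ≤ 1 / 2 := hy ▸ hφ
  have h2 : (y * r) * (2 * (b + x)) ≤ (y * r) * y := by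
    have h3 := mul_nonneg (by linarith : 0 ≤ y - 1) (by linarith : 0 ≤ (y + 1) * r - 2 * y)
    have h4 : x * r = y - 1 := by linarith
    have h5 := mul_le_mul_of_nonneg_right hby hr0
    calc (y * r) * (2 * (b + x)) = 2 * (b * y * r) + 2 * y * (x * r) := by ring
      _ ≤ r + 2 * y * (y - 1) := by rw [h4]; linarith
      _ ≤ _ := by nlinarith
  have h6 : 2 * (b + x) ≤ y := le_of_mul_le_mul_left h2 (by positivity)
  rw [hy]
  nlinarith

lemma lip_int (h : ℝ → ℝ) (hh : LipschitzWith 1 h) : Integrable (fun y => h y * gg y) := by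
  have hi : Integrable (fun y => |h 0| * gg y + |y * gg y|) :=
    (gg_int0.const_mul _).add gg_int1.abs
  refine hi.mono' (hh.continuous.mul gg_cont).aestronglyMeasurable (ae_of_all _ fun y => ?_)
  have h1 : |h y - h 0| ≤ |y| := by
    have := hh.dist_le_mul y 0
    simpa [Real.dist_eq] using this
  rw [Real.norm_eq_abs, abs_mul, abs_mul, abs_of_pos (gg_pos y)]
  have h2 : |h y| ≤ |h 0| + |y| := by
    have := abs_add_le (h y - h 0) (h 0)
    simp only [sub_add_cancel] at this
    linarith
  nlinarith [gg_pos y]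

noncomputable def sol (h : ℝ → ℝ) (x : ℝ) : ℝ :=
  (∫ y in Iic x, (h y - ∫ z, h z * gg z) * gg y) / gg x

lemma sol_int (h : ℝ → ℝ) (hh : LipschitzWith 1 h) (c : ℝ) :
    Integrable (fun y => (h y - c) * gg y) := by
  simp_rw [sub_mul]
  exact (lip_int h hh).sub (gg_int0.const_mul _)

lemma sol_deriv (h : ℝ → ℝ) (hh : LipschitzWith 1 h) (x : ℝ) :
    HasDerivAt (sol h) (x * sol h x + (h x - ∫ z, h z * gg z)) x := by
  set c := ∫ z, h z * gg z with hc
  have hint := sol_int h hh c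
  have hcont : Continuous (fun y => (h y - c) * gg y) :=
    (hh.continuous.sub continuous_const).mul gg_cont
  have hF : HasDerivAt (fun u => ∫ y in Iic u, (h y - c) * gg y) ((h x - c) * gg x) x := by
    have e : (fun u => ∫ y in Iic u, (h y - c) * gg y) =
        fun u => (∫ y in Iic 0, (h y - c) * gg y) + ∫ y in (0:ℝ)..u, (h y - c) * gg y := by
      ext u
      rw [← intervalIntegral.integral_Iic_sub_Iic hint.integrableOn hint.integrableOn]
      ring
    rw [e]
    exact (intervalIntegral.integral_hasDerivAt_right (hint.intervalIntegrable)
      (hcont.stronglyMeasurableAtFilter _ _) hcont.continuousAt).const_add _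
  have := hF.div (gg_deriv x) (gg_pos x).ne'
  convert! this using 1
  have := (gg_pos x).ne'
  simp only [sol, ← hc]
  field_simp
  ring

lemma sol_bounds (h : ℝ → ℝ) (hh : LipschitzWith 1 h) (x : ℝ) :
    |sol h x| ≤ 1 ∧ |x * sol h x + (h x - ∫ z, h z * gg z)| ≤ 1 := by
  set c := ∫ z, h z * gg z with hc
  set φ := gg x with hφ
  set p := ∫ y in Iic x, gg y with hp
  set t := ∫ y in Ioi x, gg y with ht
  have hpt : p + t = 1 := by
    rw [← gg_int_one]
    exact intervalIntegral.integral_Iic_add_Ioi gg_int0.integrableOn gg_int0.integrableOn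
  have hp0 : 0 ≤ p := integral_nonneg fun y => (gg_pos y).le
  have ht0 : 0 ≤ t := integral_nonneg fun y => (gg_pos y).le
  have hφ0 : 0 < φ := gg_pos x
  have hφ1 : φ ≤ 1 / 2 := gg_le x
  have hx := sol_int h hh (h x)
  set P := ∫ y in Iic x, (h y - h x) * gg y with hP
  set Q := ∫ y in Ioi x, (h y - h x) * gg y with hQ
  have hPQ : P + Q = c - h x := by
    rw [hP, hQ, intervalIntegral.integral_Iic_add_Ioi hx.integrableOn hx.integrableOn]
    simp_rw [sub_mul]
    rw [integral_sub (lip_int h hh) (gg_int0.const_mul _), integral_const_mul, gg_int_one, ← hc]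
    ring
  have hlip : ∀ y, |h y - h x| ≤ |y - x| := fun y => by
    have := hh.dist_le_mul y x
    simpa [Real.dist_eq] using this
  have hPa : |P| ≤ φ + x * p := by
    have e : φ + x * p = ∫ y in Iic x, (x * gg y - y * gg y) := by
      rw [integral_sub (gg_int0.const_mul _).integrableOn gg_int1.integrableOn,
        integral_const_mul, gg_Iic1]
      ring
    rw [e, ← Real.norm_eq_abs]
    refine norm_integral_le_of_norm_le
      ((gg_int0.const_mul _).sub gg_int1).integrableOn ?_
    refine (ae_restrict_iff' measurableSet_Iic).2 (ae_of_all _ fun y hy => ?_)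
    have hy : y ≤ x := hy
    have h1 := hlip y
    rw [abs_of_nonpos (by linarith : y - x ≤ 0)] at h1
    rw [Real.norm_eq_abs, abs_mul, abs_of_pos (gg_pos y)]
    nlinarith [gg_pos y]
  have hQb : |Q| ≤ φ - x * t := by
    have e : φ - x * t = ∫ y in Ioi x, (y * gg y - x * gg y) := by
      rw [integral_sub gg_int1.integrableOn (gg_int0.const_mul _).integrableOn,
        integral_const_mul, gg_Ioi1]
    rw [e, ← Real.norm_eq_abs]
    refine norm_integral_le_of_norm_le
      (gg_int1.sub (gg_int0.const_mul _)).integrableOn ?_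
    refine (ae_restrict_iff' measurableSet_Ioi).2 (ae_of_all _ fun y hy => ?_)
    have hy : x < y := hy
    have h1 := hlip y
    rw [abs_of_nonneg (by linarith : 0 ≤ y - x)] at h1
    rw [Real.norm_eq_abs, abs_mul, abs_of_pos (gg_pos y)]
    nlinarith [gg_pos y]
  have hs : sol h x = (P * t - Q * p) / φ := by
    unfold sol
    rw [← hc, ← hφ]
    congr 1
    have e : (fun y => (h y - c) * gg y) = fun y => (h y - h x) * gg y + (h x - c) * gg y := by
      ext y; ring
    rw [e, integral_add hx.integrableOn (gg_int0.const_mul _).integrableOn, integral_const_mul,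
      ← hP, ← hp]
    have : h x - c = -(P + Q) := by linarith
    rw [this]
    have : t = 1 - p := by linarith
    rw [this]; ring
  have cs1 := gg_cs (Ioi x) x
  rw [gg_Ioi1, gg_Ioi2, ← ht, ← hφ] at cs1
  have cs2 := gg_cs (Iic x) x
  rw [gg_Iic1, gg_Iic2, ← hp, ← hφ] at cs2
  have ha0 := (abs_nonneg P).trans hPa
  have hb0 := (abs_nonneg Q).trans hQb
  obtain ⟨a, ha⟩ : ∃ a, a = φ + x * p := ⟨_, rfl⟩
  obtain ⟨b, hb⟩ : ∃ b, b = φ - x * t := ⟨_, rfl⟩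
  rw [← ha] at hPa ha0
  rw [← hb] at hQb hb0
  have hab : a = b + x := by rw [ha, hb]; linear_combination x * hpt
  have main : 2 * (a * b) ≤ φ := by
    rcases le_total 0 x with h0 | h0
    · have := alg1 x b t φ h0 hb0 ht0 hφ1 hφ0 (by linarith) (by
        rw [hb]; convert! cs1 using 1; ring)
      rw [hab]; linarith
    · have := alg1 (-x) a p φ (by linarith) ha0 hp0 hφ1 hφ0 (by linarith) (by
        rw [ha]; convert! cs2 using 1 <;> ring)
      have hba : b = a + -x := by linarith
      rw [hba]; linarith
  constructor
  · rw [hs, abs_div, abs_of_pos hφ0, div_le_one hφ0]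
    calc |P * t - Q * p| ≤ |P * t| + |Q * p| := abs_sub _ _
      _ = |P| * t + |Q| * p := by rw [abs_mul, abs_mul, abs_of_nonneg ht0, abs_of_nonneg hp0]
      _ ≤ a * t + b * p := by gcongr
      _ = φ := by rw [ha, hb]; linear_combination φ * hpt
  · have e : x * sol h x + (h x - c) = -(P * b + Q * a) / φ := by
      rw [hs, show h x - c = -(P + Q) by linarith, ha, hb]
      field_simp
      ring
    rw [e, abs_div, abs_of_pos hφ0, div_le_one hφ0, abs_neg]
    calc |P * b + Q * a| ≤ |P * b| + |Q * a| := abs_add_le _ _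
      _ = |P| * b + |Q| * a := by rw [abs_mul, abs_mul, abs_of_nonneg ha0, abs_of_nonneg hb0]
      _ ≤ a * b + b * a := by gcongr
      _ ≤ φ := by linarith

theorem stein_wasserstein_second_moment_bound
    {Ω : Type*} [MeasureSpace Ω] [IsProbabilityMeasure (ℙ : Measure Ω)]
    (X : Ω → ℝ) (τ : ℝ → ℝ) (hXm : Measurable X) (hτm : Measurable τ)
    (hXint : Integrable X) (hXcentered : ∫ ω, X ω = 0)
    (hXsq : Integrable (fun ω => (X ω) ^ 2))
    (hτsq : Integrable (fun ω => (τ (X ω)) ^ 2))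
    (hτmean : ∫ ω, τ (X ω) = ∫ ω, (X ω) ^ 2)
    (hkernel : IsSteinKernel X τ) :
    dW (Measure.map X ℙ) stdGaussian ≤
      |1 - ∫ ω, (X ω) ^ 2| +
        Real.sqrt ((∫ ω, (τ (X ω)) ^ 2) - (∫ ω, (X ω) ^ 2) ^ 2) := by
  unfold dW
  refine Real.iSup_le ?_ (by positivity)
  rintro ⟨h, hh⟩
  simp only
  set m := ∫ ω, (X ω) ^ 2 with hm
  have hτX : Measurable fun ω => τ (X ω) := hτm.comp hXm
  have hL2 : MemLp (fun ω => τ (X ω)) 2 :=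
    (memLp_two_iff_integrable_sq hτX.aestronglyMeasurable).2 hτsq
  have hτint : Integrable (fun ω => τ (X ω)) := hL2.integrable (by norm_num)
  have hhX : Integrable (fun ω => h (X ω)) := by
    have hi : Integrable (fun ω => |h 0| + |X ω|) := (integrable_const _).add hXint.abs
    refine hi.mono' (hh.continuous.measurable.comp hXm).aestronglyMeasurable
      (ae_of_all _ fun ω => ?_)
    have h1 : |h (X ω) - h 0| ≤ |X ω| := by
      have := hh.dist_le_mul (X ω) 0
      simpa [Real.dist_eq] using this
    have := abs_add_le (h (X ω) - h 0) (h 0)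
    simp only [sub_add_cancel] at this
    rw [Real.norm_eq_abs]
    linarith
  rw [integral_map hXm.aemeasurable hh.continuous.aestronglyMeasurable]
  have hN : ∫ x, h x ∂stdGaussian = ∫ z, h z * gg z := by
    unfold _root_.stdGaussian
    rw [integral_gaussianReal_eq_integral_smul one_ne_zero]
    simp only [gg, smul_eq_mul, mul_comm]
  rw [hN]
  set c := ∫ z, h z * gg z with hc
  have hd : ∀ x, deriv (sol h) x = x * sol h x + (h x - c) := fun x => (sol_deriv h hh x).deriv
  have hdiff : Differentiable ℝ (sol h) := fun x => (sol_deriv h hh x).differentiableAt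
  have hdc : Continuous (deriv (sol h)) := by
    rw [funext hd]
    exact (continuous_id.mul hdiff.continuous).add (hh.continuous.sub continuous_const)
  have hdb : ∀ x, |deriv (sol h) x| ≤ 1 := fun x => by
    rw [hd]; exact (sol_bounds h hh x).2
  have hk := hkernel (sol h) (contDiff_one_iff_deriv.2 ⟨hdiff, hdc⟩)
    ⟨1, fun x => (sol_bounds h hh x).1⟩ ⟨1, hdb⟩
  have hdX : Integrable fun ω => deriv (sol h) (X ω) :=
    (integrable_const (1 : ℝ)).mono' (hdc.measurable.comp hXm).aestronglyMeasurable
      (ae_of_all _ fun ω => hdb _)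
  have hXf : Integrable fun ω => X ω * sol h (X ω) := by
    refine hXint.abs.mono'
      (hXm.mul (hdiff.continuous.measurable.comp hXm)).aestronglyMeasurable
      (ae_of_all _ fun ω => ?_)
    rw [Real.norm_eq_abs, abs_mul]
    have := (sol_bounds h hh (X ω)).1
    nlinarith [abs_nonneg (X ω)]
  have hdτ : Integrable fun ω => deriv (sol h) (X ω) * τ (X ω) := by
    refine hτint.abs.mono'
      ((hdc.measurable.comp hXm).mul hτX).aestronglyMeasurable
      (ae_of_all _ fun ω => ?_)
    rw [Real.norm_eq_abs, abs_mul]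
    have := hdb (X ω)
    nlinarith [abs_nonneg (τ (X ω))]
  have e1 : (∫ ω, h (X ω)) - c = ∫ ω, deriv (sol h) (X ω) * (1 - τ (X ω)) := by
    simp_rw [mul_sub, mul_one]
    rw [integral_sub hdX hdτ, ← hk, ← integral_sub hdX hXf]
    have : (fun ω => deriv (sol h) (X ω) - X ω * sol h (X ω)) = fun ω => h (X ω) - c := by
      ext ω; rw [hd]; ring
    rw [this, integral_sub hhX (integrable_const _)]
    simp
  have hV : ∫ ω, (τ (X ω) - m) ^ 2 = (∫ ω, (τ (X ω)) ^ 2) - m ^ 2 := by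
    have : (fun ω => (τ (X ω) - m) ^ 2) = fun ω => (τ (X ω) ^ 2 - 2 * m * τ (X ω)) + m ^ 2 := by
      ext ω; ring
    have hi : Integrable (fun ω => τ (X ω) ^ 2 - 2 * m * τ (X ω)) :=
      hτsq.sub (hτint.const_mul _)
    rw [this, integral_add hi (integrable_const _),
      integral_sub hτsq (hτint.const_mul _), integral_const_mul, hτmean]
    simp
    ring
  have hdev : MemLp (fun ω => |τ (X ω) - m|) 2 := (hL2.sub (memLp_const m)).abs
  have hcs : ∫ ω, |τ (X ω) - m| ≤ √((∫ ω, (τ (X ω)) ^ 2) - m ^ 2) := by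
    apply Real.le_sqrt_of_sq_le
    rw [← hV]
    have h1 := variance_nonneg (fun ω => |τ (X ω) - m|) ℙ
    rw [variance_eq_sub hdev] at h1
    simp only [Pi.pow_apply, sq_abs] at h1
    linarith
  rw [e1, ← Real.norm_eq_abs]
  have hdevi : Integrable fun ω => |τ (X ω) - m| := hdev.integrable (by norm_num)
  calc _ ≤ ∫ ω, (|1 - m| + |τ (X ω) - m|) := by
        refine norm_integral_le_of_norm_le ((integrable_const _).add hdevi)
          (ae_of_all _ fun ω => ?_)
        rw [Real.norm_eq_abs, abs_mul]
        have h1 := hdb (X ω)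
        have h2 : |1 - τ (X ω)| ≤ |1 - m| + |τ (X ω) - m| := by
          have := abs_sub (1 - m) (τ (X ω) - m)
          rwa [show 1 - m - (τ (X ω) - m) = 1 - τ (X ω) by ring] at this
        nlinarith [abs_nonneg (1 - τ (X ω))]
    _ = |1 - m| + ∫ ω, |τ (X ω) - m| := by
        rw [integral_add (integrable_const _) hdevi]; simp
    _ ≤ _ := by linarith
end

section
/- Let α > 0 and let ρ_α(x) := α (α/(α+1) + x)^{α−1} for x ∈ (−α/(α+1), 1/(α+1)) be the density of the centered Beta(α,1) distribution. Then for every y in (−α/(α+1), 1/(α+1)), −(1/ρ_α(y)) ∫_{−α/(α+1)}^y x ρ_α(x) dx = (1/(α+1)) (α/(α+1) + y) (1/(α+1) − y). -/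
open MeasureTheory Real

/-- Density of the centered Beta(α,1) distribution on
`(-α/(α+1), 1/(α+1))`. -/
noncomputable def centeredBetaDensity (α x : ℝ) : ℝ :=
  α * (α / (α + 1) + x) ^ (α - 1)

theorem centered_beta_stein_kernel (α : ℝ) (hα : 0 < α) (y : ℝ)
    (hy : y ∈ Set.Ioo (-(α / (α + 1))) (1 / (α + 1))) :
    -(1 / centeredBetaDensity α y) *
        ∫ x in Set.Ioc (-(α / (α + 1))) y, x * centeredBetaDensity α x =
      (1 / (α + 1)) * (α / (α + 1) + y) * (1 / (α + 1) - y) := by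
  obtain ⟨h1, h2⟩ := hy
  have hc : 0 < α + 1 := by linarith
  set c := α / (α + 1) with hcdef
  have ht : 0 < c + y := by linarith
  have key : ∫ x in Set.Ioc (-c) y, x * centeredBetaDensity α x
      = c * (c + y) ^ α * (c + y - 1) := by
    rw [← intervalIntegral.integral_of_le h1.le]
    have e1 : ∫ x in (-c)..y, x * centeredBetaDensity α x
        = ∫ u in (0:ℝ)..(c + y), (u - c) * (α * u ^ (α - 1)) := by
      have := intervalIntegral.integral_comp_add_left (a := -c) (b := y)
        (fun u : ℝ => (u - c) * (α * u ^ (α - 1))) c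
      rw [add_neg_cancel] at this
      rw [← this]
      refine intervalIntegral.integral_congr fun x _ => ?_
      simp only [centeredBetaDensity, ← hcdef]
      ring
    have e2 : ∫ u in (0:ℝ)..(c + y), (u - c) * (α * u ^ (α - 1))
        = ∫ u in (0:ℝ)..(c + y), (α * u ^ α - (c * α) * u ^ (α - 1)) := by
      rw [intervalIntegral.integral_of_le ht.le, intervalIntegral.integral_of_le ht.le]
      refine setIntegral_congr_fun measurableSet_Ioc fun u hu => ?_
      have hu0 : u ^ α = u ^ (α - 1) * u := by
        rw [← Real.rpow_add_one hu.1.ne', sub_add_cancel]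
      simp only [hu0]
      ring
    rw [e1, e2, intervalIntegral.integral_sub
      ((intervalIntegral.intervalIntegrable_rpow' (by linarith)).const_mul _)
      ((intervalIntegral.intervalIntegrable_rpow' (by linarith)).const_mul _),
      intervalIntegral.integral_const_mul, intervalIntegral.integral_const_mul,
      integral_rpow (Or.inl (by linarith)), integral_rpow (Or.inl (by linarith)),
      sub_add_cancel, Real.zero_rpow hα.ne', Real.zero_rpow hc.ne', Real.rpow_add_one ht.ne']
    have : α * (((c + y) ^ α * (c + y) - 0) / (α + 1)) = c * ((c + y) ^ α * (c + y)) := by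
      rw [hcdef]; ring
    rw [this]
    field_simp
    ring
  have hp : (c + y) ^ α = (c + y) ^ (α - 1) * (c + y) := by
    rw [← Real.rpow_add_one ht.ne', sub_add_cancel]
  have hpos : 0 < (c + y) ^ (α - 1) := Real.rpow_pos_of_pos ht _
  have h3 : 1 / (α + 1) = 1 - c := by rw [hcdef]; field_simp; ring
  have h4 : c = α * (1 - c) := by rw [← h3, hcdef]; ring
  rw [key, hp, h3]
  simp only [centeredBetaDensity, ← hcdef]
  generalize (c + y) ^ (α - 1) = P at hpos ⊢
  have h5 : -(1 / (α * P)) * (c * (P * (c + y)) * (c + y - 1))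
      = (c / α) * (c + y) * (1 - c - y) := by
    field_simp
    ring
  have h6 : c / α = 1 - c := by rw [div_eq_iff hα.ne']; linarith
  rw [h5, h6]
end
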